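/- arXiv:2201.09002 — 2 statements merged into one kernel-verified Lean document; each statement's English description precedes it below -/
import Mathlib

section
/- Let ℓ be an odd prime and ε a non-square unit of ℤ/ℓℤ. If H is a subgroup of GL₂(ℤ/ℓℤ) contained in the normalizer C_ns⁺(ℓ) of the nonsplit Cartan subgroup, and every element of H has 1 as an eigenvalue (i.e., 1 is a root of its characteristic polynomial over ℤ/ℓℤ), then H has at most 2 elements. -/
open Matrix

/-- The nonsplit Cartan subgroup `C_ns(ℓ)` of `GL₂(ℤ/ℓℤ)`, as a set: all matrices
`[[a, εb], [b, a]]` with `(a, b) ≠ (0, 0)`. -/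
def Cns (ℓ : ℕ) (ε : ZMod ℓ) : Set (GL (Fin 2) (ZMod ℓ)) :=
  {g | ∃ a b : ZMod ℓ, ¬(a = 0 ∧ b = 0) ∧
    (g : Matrix (Fin 2) (Fin 2) (ZMod ℓ)) = !![a, ε * b; b, a]}

/-!
Let `J` be a `2 × 2` matrix over a field `K` without eigenvalues in `K`. The matrices commuting
with `J` form the quadratic field `K[J]`, whose unit group is the nonsplit Cartan subgroup `C`; for
`J = [[0, ε], [1, 0]]` this is `C_ns`. If `g` normalizes `C`, then `g J g⁻¹` is a root in `K[J]` of
the characteristic polynomial of `J`, so it is `J` or the conjugate root `tr J - J`. Hence the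
product of two elements of the normalizer lying outside `C` lies in `C`. On the other hand, an
element `g` of `C` with eigenvalue `1` equals `1`, because `g - 1` is a singular element of the
field `K[J]`. So any two nontrivial elements of `H` have product `1`, which leaves room for
at most one of them.
-/

theorem card_dvd_two_of_forall_mul_eq_one {G : Type*} [Group G]
    (h : ∀ a b : G, a ≠ 1 → b ≠ 1 → a * b = 1) : Nat.card G ∣ 2 := by
  cases subsingleton_or_nontrivial G with
  | inl _ => simp only [Nat.card_unique, one_dvd]
  | inr _ =>
    obtain ⟨a, ha⟩ := exists_ne (1 : G)
    refine dvd_of_eq ((Nat.card_eq_two_iff' 1).2 ⟨a, ha, fun b hb ↦ ?_⟩)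
    exact mul_left_cancel ((h a b ha hb).trans (h a a ha ha).symm)

/-- The group of units of `M` commuting with `x`. For a `2 × 2` matrix `J` over a field `K` without
eigenvalues in `K`, this is the nonsplit Cartan subgroup `K[J]ˣ` of `GL₂(K)`. -/
def unitsCentralizer {M : Type*} [Monoid M] (x : M) : Subgroup Mˣ :=
  (Submonoid.centralizer {x}).units

theorem mem_unitsCentralizer_iff {M : Type*} [Monoid M] {x : M} {u : Mˣ} :
    u ∈ unitsCentralizer x ↔ Commute (u : M) x := by
  have mem_iff (y : M) : y ∈ Submonoid.centralizer {x} ↔ Commute y x := by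
    simp [Submonoid.mem_centralizer_iff, commute_iff_eq, eq_comm]
  rw [unitsCentralizer, Submonoid.mem_units_iff, mem_iff, mem_iff]
  exact and_iff_left_of_imp Commute.units_inv_left

theorem mul_self_eq_trace_smul_sub_det_smul_one {R : Type*} [CommRing R]
    (M : Matrix (Fin 2) (Fin 2) R) : M * M = M.trace • M - M.det • 1 := by
  nontriviality R
  have cayley_hamilton := M.aeval_self_charpoly
  simp only [charpoly_fin_two, map_add, map_sub, map_mul, Polynomial.aeval_X,
    Polynomial.aeval_C, Algebra.algebraMap_eq_smul_one, sq] at cayley_hamilton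
  rw [eq_sub_iff_add_eq, ← sub_eq_zero, ← cayley_hamilton]
  simp only [smul_mul_assoc, one_mul]
  abel

section NoEigenvalue

variable {K : Type*} [Field K]

theorem linearIndependent_mulVec_of_forall_not_isRoot_charpoly {n : Type*} [Fintype n]
    [DecidableEq n] {J : Matrix n n K} (hJ : ∀ x, ¬ J.charpoly.IsRoot x) {v : n → K}
    (hv : v ≠ 0) : LinearIndependent K ![v, J *ᵥ v] := by
  refine (LinearIndependent.pair_iff' hv).2 fun x hx ↦ hJ x ?_
  rw [Polynomial.IsRoot.def, eval_charpoly]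
  refine exists_mulVec_eq_zero_iff.1 ⟨v, hv, ?_⟩
  rw [sub_mulVec, ← hx, scalar_apply, ← smul_one_eq_diagonal, smul_mulVec, one_mulVec, sub_self]

variable {J : Matrix (Fin 2) (Fin 2) K}

theorem eq_zero_of_commute_of_det_eq_zero (hJ : ∀ x, ¬ J.charpoly.IsRoot x)
    {M : Matrix (Fin 2) (Fin 2) K} (hMJ : Commute M J) (hM : M.det = 0) : M = 0 := by
  obtain ⟨v, hv, hMv⟩ := exists_mulVec_eq_zero_iff.2 hM
  have hMJv : M *ᵥ (J *ᵥ v) = 0 := by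
    rw [mulVec_mulVec, hMJ.eq, ← mulVec_mulVec, hMv, mulVec_zero]
  have span_eq_top : Submodule.span K (Set.range ![v, J *ᵥ v]) = ⊤ :=
    (linearIndependent_mulVec_of_forall_not_isRoot_charpoly hJ hv).span_eq_top_of_card_eq_finrank
      (by simp)
  refine toLin'.map_eq_zero_iff.1 (LinearMap.ext_on_range span_eq_top fun i ↦ ?_)
  fin_cases i
  · exact hMv
  · exact hMJv

theorem eq_or_eq_trace_smul_one_sub_of_commute (hJ : ∀ x, ¬ J.charpoly.IsRoot x)
    {X : Matrix (Fin 2) (Fin 2) K} (hXJ : Commute X J) (htrace : X.trace = J.trace)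
    (hdet : X.det = J.det) : X = J ∨ X = J.trace • 1 - J := by
  have product_eq_zero : (X - J) * (X - (J.trace • 1 - J)) = 0 := by
    calc (X - J) * (X - (J.trace • 1 - J))
        = (X * X - J.trace • X) - (J * J - J.trace • J) + (X * J - J * X) := by
          simp only [mul_sub, sub_mul, mul_smul_comm, mul_one, smul_sub]
          abel
      _ = 0 := by
          rw [hXJ.eq, mul_self_eq_trace_smul_sub_det_smul_one X,
            mul_self_eq_trace_smul_sub_det_smul_one J, htrace, hdet]
          abel
  have commute_conj : Commute (J.trace • 1 - J) J :=
    ((Commute.one_left J).smul_left _).sub_left (Commute.refl J)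
  have det_mul_det : (X - J).det * (X - (J.trace • 1 - J)).det = 0 := by
    rw [← det_mul, product_eq_zero, det_zero]
  exact (mul_eq_zero.1 det_mul_det).imp
    (fun h ↦ sub_eq_zero.1 <|
      eq_zero_of_commute_of_det_eq_zero hJ (hXJ.sub_left (Commute.refl J)) h)
    (fun h ↦ sub_eq_zero.1 <|
      eq_zero_of_commute_of_det_eq_zero hJ (hXJ.sub_left commute_conj) h)

theorem commute_or_semiconjBy_of_mem_normalizer (hJ : ∀ x, ¬ J.charpoly.IsRoot x)
    {g : GL (Fin 2) K}
    (hg : g ∈ Subgroup.normalizer (unitsCentralizer J : Set (GL (Fin 2) K))) :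
    Commute (g : Matrix (Fin 2) (Fin 2) K) J ∨
      SemiconjBy (g : Matrix (Fin 2) (Fin 2) K) J (J.trace • 1 - J) := by
  obtain ⟨j, rfl⟩ : IsUnit J := by
    rw [← spectrum.zero_notMem_iff K, mem_spectrum_iff_isRoot_charpoly]
    exact hJ 0
  have conj_commute : Commute (↑(g * j * g⁻¹) : Matrix (Fin 2) (Fin 2) K) j :=
    mem_unitsCentralizer_iff.1 <|
      (Subgroup.mem_normalizer_iff.1 hg j).1 (mem_unitsCentralizer_iff.2 (Commute.refl _))
  exact (eq_or_eq_trace_smul_one_sub_of_commute hJ conj_commute (trace_units_conj g _)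
    (det_units_conj g _)).imp
      (Units.mul_inv_eq_iff_eq_mul g).1 (Units.mul_inv_eq_iff_eq_mul g).1

theorem mul_mem_unitsCentralizer_of_mem_normalizer (hJ : ∀ x, ¬ J.charpoly.IsRoot x)
    {g h : GL (Fin 2) K}
    (hg : g ∈ Subgroup.normalizer (unitsCentralizer J : Set (GL (Fin 2) K)))
    (hh : h ∈ Subgroup.normalizer (unitsCentralizer J : Set (GL (Fin 2) K)))
    (hgJ : g ∉ unitsCentralizer J) (hhJ : h ∉ unitsCentralizer J) :
    g * h ∈ unitsCentralizer J := by
  rw [mem_unitsCentralizer_iff] at hgJ hhJ ⊢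
  have semiconj_g := (commute_or_semiconjBy_of_mem_normalizer hJ hg).resolve_left hgJ
  have semiconj_h := (commute_or_semiconjBy_of_mem_normalizer hJ hh).resolve_left hhJ
  have semiconj_g_conj : SemiconjBy (g : Matrix (Fin 2) (Fin 2) K) (J.trace • 1 - J) J := by
    have commute_trace : Commute (g : Matrix (Fin 2) (Fin 2) K) (J.trace • 1) :=
      (Commute.one_right _).smul_right _
    simpa only [sub_sub_cancel] using SemiconjBy.sub_right commute_trace semiconj_g
  exact semiconj_g_conj.mul_left semiconj_h

theorem eq_one_of_mem_unitsCentralizer_of_isRoot_charpoly (hJ : ∀ x, ¬ J.charpoly.IsRoot x)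
    {g : GL (Fin 2) K} (hg : g ∈ unitsCentralizer J)
    (hroot : (g : Matrix (Fin 2) (Fin 2) K).charpoly.IsRoot 1) : g = 1 := by
  rw [Polynomial.IsRoot.def, eval_charpoly, map_one] at hroot
  have one_sub_commute := (Commute.one_left J).sub_left (mem_unitsCentralizer_iff.1 hg)
  exact Units.ext (sub_eq_zero.1 (eq_zero_of_commute_of_det_eq_zero hJ one_sub_commute hroot)).symm

-- Divisibility, unlike `≤ 2`, excludes an infinite `H`, whose `Nat.card` is `0`.
theorem stmt_9_general (hJ : ∀ x, ¬ J.charpoly.IsRoot x) {H : Subgroup (GL (Fin 2) K)}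
    (hle : H ≤ Subgroup.normalizer (unitsCentralizer J : Set (GL (Fin 2) K)))
    (heig : ∀ g ∈ H, (g : Matrix (Fin 2) (Fin 2) K).charpoly.IsRoot 1) :
    Nat.card H ∣ 2 := by
  have eq_one {g : GL (Fin 2) K} (hg : g ∈ H) (hgJ : g ∈ unitsCentralizer J) : g = 1 :=
    eq_one_of_mem_unitsCentralizer_of_isRoot_charpoly hJ hgJ (heig g hg)
  refine card_dvd_two_of_forall_mul_eq_one fun ⟨g, hg⟩ ⟨h, hh⟩ hg1 hh1 ↦ Subtype.ext ?_
  exact eq_one (H.mul_mem hg hh) <| mul_mem_unitsCentralizer_of_mem_normalizer hJ (hle hg) (hle hh)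
    (fun hgJ ↦ hg1 (Subtype.ext (eq_one hg hgJ))) (fun hhJ ↦ hh1 (Subtype.ext (eq_one hh hhJ)))

end NoEigenvalue

theorem isRoot_charpoly_antidiagonal_iff {R : Type*} [CommRing R] {ε x : R} :
    (!![0, ε; 1, 0] : Matrix (Fin 2) (Fin 2) R).charpoly.IsRoot x ↔ ε = x * x := by
  simp [Polynomial.IsRoot.def, eval_charpoly, det_fin_two, sub_eq_zero, eq_comm]

theorem commute_antidiagonal_iff {R : Type*} [CommRing R] {ε : R}
    {M : Matrix (Fin 2) (Fin 2) R} :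
    Commute M !![0, ε; 1, 0] ↔ ∃ a b, M = !![a, ε * b; b, a] := by
  constructor
  · intro h
    have upper_right : M 0 1 = ε * M 1 0 := by
      simpa [mul_apply, Fin.sum_univ_two] using congrFun₂ h.eq 0 0
    have lower_right : M 1 1 = M 0 0 := by
      simpa [mul_apply, Fin.sum_univ_two] using congrFun₂ h.eq 1 0
    exact ⟨M 0 0, M 1 0, by conv_lhs => rw [M.eta_fin_two, upper_right, lower_right]⟩
  · rintro ⟨a, b, rfl⟩
    simp [commute_iff_eq, mul_comm]

theorem coe_unitsCentralizer_antidiagonal (ℓ : ℕ) [Fact (1 < ℓ)] (ε : ZMod ℓ) :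
    (unitsCentralizer !![0, ε; 1, 0] : Set (GL (Fin 2) (ZMod ℓ))) = Cns ℓ ε := by
  ext g
  rw [SetLike.mem_coe, mem_unitsCentralizer_iff, commute_antidiagonal_iff]
  refine exists₂_congr fun a b ↦ (and_iff_right_of_imp ?_).symm
  rintro hg ⟨rfl, rfl⟩
  exact g.ne_zero (hg.trans (by simp [← Matrix.ext_iff]))

theorem stmt_9 (ℓ : ℕ) [Fact ℓ.Prime] (hodd : Odd ℓ) (ε : ZMod ℓ)
    (hsq : ¬ IsSquare ε) (hε : ε ≠ 0)
    (Hc : Subgroup (GL (Fin 2) (ZMod ℓ)))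
    (hHc : (Hc : Set (GL (Fin 2) (ZMod ℓ))) = Cns ℓ ε)
    (H : Subgroup (GL (Fin 2) (ZMod ℓ))) (hle : H ≤ Subgroup.normalizer (Hc : Set (GL (Fin 2) (ZMod ℓ))))
    (heig : ∀ g : GL (Fin 2) (ZMod ℓ), g ∈ H →
      ((g : Matrix (Fin 2) (Fin 2) (ZMod ℓ)).charpoly).IsRoot 1) :
    Nat.card H ≤ 2 := by
  rw [hHc, ← coe_unitsCentralizer_antidiagonal] at hle
  have no_eigenvalue (x : ZMod ℓ) : ¬ (!![0, ε; 1, 0] : Matrix _ _ (ZMod ℓ)).charpoly.IsRoot x :=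
    fun hx ↦ hsq ⟨x, isRoot_charpoly_antidiagonal_iff.1 hx⟩
  exact Nat.le_of_dvd two_pos (stmt_9_general no_eigenvalue hle heig)
end

section
/- Let ℓ be a prime with ℓ > 13, let ε be a non-square unit of ℤ/ℓℤ, let e ∈ {1, 2, 3, 4, 6} and set f = gcd(ℓ − 1, e). Let D^f be the subgroup of GL₂(ℤ/ℓℤ) consisting of the diagonal matrices diag(a^f, 1) with a ∈ (ℤ/ℓℤ)^×. Then there is no g ∈ GL₂(ℤ/ℓℤ) such that g·D^f·g⁻¹ is contained in the normalizer C_ns⁺(ℓ) of the nonsplit Cartan subgroup C_ns(ℓ). -/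
open Matrix

/-- The `f`-th power `D^f` of the semi-Cartan subgroup of `GL₂(ℤ/ℓℤ)`, as a set:
all diagonal matrices `diag(a^f, 1)` with `a ∈ (ℤ/ℓℤ)ˣ`. -/
def semiCartanPow (ℓ f : ℕ) : Set (GL (Fin 2) (ZMod ℓ)) :=
  {d | ∃ a : (ZMod ℓ)ˣ,
    (d : Matrix (Fin 2) (Fin 2) (ZMod ℓ)) = !![(a : ZMod ℓ) ^ f, 0; 0, 1]}

/-!
A matrix normalising the Cartan subgroup conjugates multiplication by `√ε` to a square root of `ε`
in the field `K[√ε]`, hence to `√ε` or `-√ε`. So it either lies in the Cartan subgroup, where every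
discriminant has the form `ε * (2 * b) ^ 2`, or it has trace zero. The discriminant `(x - y) ^ 2`
and the trace `x + y` of `diag(x, y)` therefore force `x = y` or `x = -y`, whereas `D^f` contains
some `diag(x, 1)` with `x ^ 2 ≠ 1`.
-/

section CommRing

variable {R : Type*} [CommRing R]

/-- The matrix of multiplication by `a + b√ε` on `R[√ε]` in the basis `(1, √ε)`. -/
def cartanMatrix (ε a b : R) : Matrix (Fin 2) (Fin 2) R :=
  !![a, ε * b; b, a]

theorem cartanMatrix_add (ε a b c d : R) :
    cartanMatrix ε a b + cartanMatrix ε c d = cartanMatrix ε (a + c) (b + d) := by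
  simp [cartanMatrix, mul_add]

theorem cartanMatrix_sub (ε a b c d : R) :
    cartanMatrix ε a b - cartanMatrix ε c d = cartanMatrix ε (a - c) (b - d) := by
  simp [cartanMatrix, mul_sub]

theorem cartanMatrix_commute (ε a b c d : R) :
    Commute (cartanMatrix ε a b) (cartanMatrix ε c d) := by
  simp only [Commute, SemiconjBy, cartanMatrix, mul_fin_two]
  ring_nf

theorem cartanMatrix_zero_one_sq (ε : R) : cartanMatrix ε 0 1 ^ 2 = scalar (Fin 2) ε := by
  simp [cartanMatrix, sq, diagonal_fin_two]

theorem det_cartanMatrix (ε a b : R) : (cartanMatrix ε a b).det = a ^ 2 - ε * b ^ 2 := by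
  rw [cartanMatrix, det_fin_two_of]
  ring

theorem discr_cartanMatrix (ε a b : R) : (cartanMatrix ε a b).discr = ε * (2 * b) ^ 2 := by
  rw [discr_fin_two, det_cartanMatrix, cartanMatrix, trace_fin_two_of]
  ring

theorem discr_diag_fin_two (x y : R) : !![x, 0; 0, y].discr = (x - y) ^ 2 := by
  rw [discr_fin_two, det_fin_two_of, trace_fin_two_of]
  ring

theorem commute_cartanMatrix_zero_one_iff {ε : R} {A : Matrix (Fin 2) (Fin 2) R} :
    Commute A (cartanMatrix ε 0 1) ↔ ∃ a b, A = cartanMatrix ε a b := by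
  refine ⟨fun h ↦ ⟨A 0 0, A 1 0, ?_⟩, ?_⟩
  · rw [A.eta_fin_two, cartanMatrix, Commute, SemiconjBy, mul_fin_two, mul_fin_two] at h
    have h₀₀ : A 0 1 = ε * A 1 0 := by simpa using congrFun₂ h 0 0
    have h₁₀ : A 1 1 = A 0 0 := by simpa using congrFun₂ h 1 0
    rw [cartanMatrix, ← h₀₀]
    nth_rw 2 [← h₁₀]
    exact A.eta_fin_two
  · rintro ⟨a, b, rfl⟩
    exact cartanMatrix_commute ε a b 0 1

theorem trace_eq_zero_of_mul_cartanMatrix_zero_one_eq_neg {ε : R} {A : Matrix (Fin 2) (Fin 2) R}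
    (h : A * cartanMatrix ε 0 1 = -(cartanMatrix ε 0 1 * A)) : A.trace = 0 := by
  rw [A.eta_fin_two, cartanMatrix, mul_fin_two, mul_fin_two] at h
  have h₁₀ : A 1 1 = -A 0 0 := by simpa using congrFun₂ h 1 0
  rw [trace_fin_two, h₁₀, add_neg_cancel]

/-- The Cartan subgroup of `GL₂(R)` attached to `ε`, that is, the unit group of `R[√ε]` acting on
`R[√ε] ≃ R²`; over a field it is nonsplit when `ε` is not a square. It is encoded as the centralizer
of multiplication by `√ε`, see `mem_cartan`. -/
def cartan (ε : R) : Subgroup (GL (Fin 2) R) where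
  carrier := {g | Commute (g : Matrix (Fin 2) (Fin 2) R) (cartanMatrix ε 0 1)}
  mul_mem' hg hh := Commute.mul_left hg hh
  one_mem' := Commute.one_left _
  inv_mem' hg := Commute.units_inv_left hg

theorem mem_cartan {ε : R} {g : GL (Fin 2) R} :
    g ∈ cartan ε ↔ ∃ a b, (g : Matrix (Fin 2) (Fin 2) R) = cartanMatrix ε a b :=
  commute_cartanMatrix_zero_one_iff

end CommRing

theorem coe_cartan_eq_Cns {ℓ : ℕ} [Nontrivial (ZMod ℓ)] (ε : ZMod ℓ) :
    (cartan ε : Set (GL (Fin 2) (ZMod ℓ))) = Cns ℓ ε := by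
  ext g
  refine mem_cartan.trans ⟨?_, fun ⟨a, b, _, hg⟩ ↦ ⟨a, b, hg⟩⟩
  rintro ⟨a, b, hg⟩
  refine ⟨a, b, ?_, hg⟩
  rintro ⟨rfl, rfl⟩
  exact g.ne_zero (hg.trans (by simp [cartanMatrix, ← Matrix.ext_iff]))

section Field

variable {K : Type*} [Field K] {ε : K}

theorem eq_zero_and_eq_zero_of_sq_eq_mul_sq (hε : ¬IsSquare ε) {x y : K} (h : x ^ 2 = ε * y ^ 2) :
    x = 0 ∧ y = 0 := by
  obtain rfl : y = 0 := by
    by_contra hy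
    exact hε ⟨x / y, by field_simp; exact h.symm⟩
  simpa using h

theorem cartanMatrix_eq_zero_of_det_eq_zero (hε : ¬IsSquare ε) {a b : K}
    (h : (cartanMatrix ε a b).det = 0) : cartanMatrix ε a b = 0 := by
  rw [det_cartanMatrix, sub_eq_zero] at h
  obtain ⟨rfl, rfl⟩ := eq_zero_and_eq_zero_of_sq_eq_mul_sq hε h
  simp [cartanMatrix, ← Matrix.ext_iff]

theorem cartanMatrix_eq_or_eq_neg_of_sq_eq_sq (hε : ¬IsSquare ε) {a b c d : K}
    (h : cartanMatrix ε a b ^ 2 = cartanMatrix ε c d ^ 2) :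
    cartanMatrix ε a b = cartanMatrix ε c d ∨ cartanMatrix ε a b = -cartanMatrix ε c d := by
  have hmul : cartanMatrix ε (a + c) (b + d) * cartanMatrix ε (a - c) (b - d) = 0 := by
    rw [← cartanMatrix_add, ← cartanMatrix_sub, ← (cartanMatrix_commute ε a b c d).sq_sub_sq, h,
      sub_self]
  have hdet := congrArg det hmul
  rw [det_mul, det_zero, mul_eq_zero] at hdet
  rcases hdet with hadd | hsub
  · right
    rw [← add_eq_zero_iff_eq_neg, cartanMatrix_add, cartanMatrix_eq_zero_of_det_eq_zero hε hadd]
  · left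
    rw [← sub_eq_zero, cartanMatrix_sub, cartanMatrix_eq_zero_of_det_eq_zero hε hsub]

theorem mem_cartan_or_trace_eq_zero_of_mem_normalizer (hε : ¬IsSquare ε) {h : GL (Fin 2) K}
    (hh : h ∈ Subgroup.normalizer (cartan ε : Set (GL (Fin 2) K))) :
    h ∈ cartan ε ∨ (h : Matrix (Fin 2) (Fin 2) K).trace = 0 := by
  have hε₀ : ε ≠ 0 := fun h₀ ↦ hε (h₀ ▸ IsSquare.zero)
  have hdet : (cartanMatrix ε 0 1).det ≠ 0 := by simpa [det_cartanMatrix] using hε₀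
  let J : GL (Fin 2) K := GeneralLinearGroup.mkOfDetNeZero (cartanMatrix ε 0 1) hdet
  have hJ : J ∈ cartan ε := mem_cartan.mpr ⟨0, 1, rfl⟩
  obtain ⟨a, b, hab⟩ := mem_cartan.mp ((Subgroup.mem_normalizer_iff.mp hh J).mp hJ)
  have hconj : SemiconjBy (h : Matrix (Fin 2) (Fin 2) K) (cartanMatrix ε 0 1)
      (cartanMatrix ε a b) := by
    rw [SemiconjBy, ← hab, ← Units.val_mul, inv_mul_cancel_right, Units.val_mul]
    rfl
  have hsq : cartanMatrix ε a b ^ 2 = cartanMatrix ε 0 1 ^ 2 := by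
    have hscalar : Commute (h : Matrix (Fin 2) (Fin 2) K) (scalar (Fin 2) ε) :=
      (scalar_commute ε (Commute.all ε) _).symm
    rw [← h.mul_left_inj, ← (hconj.pow_right 2).eq, cartanMatrix_zero_one_sq, hscalar.eq]
  rcases cartanMatrix_eq_or_eq_neg_of_sq_eq_sq hε hsq with heq | hneg
  · left
    rwa [heq] at hconj
  · right
    rw [hneg, SemiconjBy, neg_mul] at hconj
    exact trace_eq_zero_of_mul_cartanMatrix_zero_one_eq_neg hconj

theorem sq_eq_sq_of_conj_diag_mem_normalizer_cartan (hε : ¬IsSquare ε) {g d : GL (Fin 2) K}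
    {x y : K} (hd : (d : Matrix (Fin 2) (Fin 2) K) = !![x, 0; 0, y])
    (h : g * d * g⁻¹ ∈ Subgroup.normalizer (cartan ε : Set (GL (Fin 2) K))) : x ^ 2 = y ^ 2 := by
  rw [sq_eq_sq_iff_eq_or_eq_neg]
  refine (mem_cartan_or_trace_eq_zero_of_mem_normalizer hε h).imp (fun hmem ↦ ?_) fun htr ↦ ?_
  · obtain ⟨a, b, hab⟩ := mem_cartan.mp hmem
    have hdiscr : (x - y) ^ 2 = ε * (2 * b) ^ 2 := by
      rw [← discr_cartanMatrix ε a, ← hab, Units.val_mul, Units.val_mul, coe_units_inv,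
        discr_conj, hd, discr_diag_fin_two]
    exact sub_eq_zero.mp (eq_zero_and_eq_zero_of_sq_eq_mul_sq hε hdiscr).1
  · rw [Units.val_mul, Units.val_mul, trace_units_conj, hd, trace_fin_two_of] at htr
    exact eq_neg_of_add_eq_zero_left htr

theorem stmt_10_general (hε : ¬IsSquare ε) {f : ℕ} (hf : ∃ u : Kˣ, u ^ (2 * f) ≠ 1) :
    ¬∃ g : GL (Fin 2) K, ∀ d : GL (Fin 2) K,
      (∃ a : Kˣ, (d : Matrix (Fin 2) (Fin 2) K) = !![(a : K) ^ f, 0; 0, 1]) →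
        g * d * g⁻¹ ∈ Subgroup.normalizer (cartan ε : Set (GL (Fin 2) K)) := by
  rintro ⟨g, hg⟩
  obtain ⟨u, hu⟩ := hf
  let d : GL (Fin 2) K := GeneralLinearGroup.mkOfDetNeZero !![(u : K) ^ f, 0; 0, 1] (by simp)
  have hsq := sq_eq_sq_of_conj_diag_mem_normalizer_cartan hε rfl (hg d ⟨u, rfl⟩)
  apply hu
  ext
  simpa [mul_comm 2 f, pow_mul] using hsq

end Field

theorem stmt_10 (ℓ : ℕ) [Fact ℓ.Prime] (hℓ : 13 < ℓ) (ε : ZMod ℓ)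
    (hsq : ¬ IsSquare ε) (hε : ε ≠ 0)
    (e : ℕ) (he : e ∈ ({1, 2, 3, 4, 6} : Set ℕ)) (f : ℕ) (hf : f = Nat.gcd (ℓ - 1) e)
    (Hc : Subgroup (GL (Fin 2) (ZMod ℓ)))
    (hHc : (Hc : Set (GL (Fin 2) (ZMod ℓ))) = Cns ℓ ε) :
    ¬ ∃ g : GL (Fin 2) (ZMod ℓ),
      ∀ d ∈ semiCartanPow ℓ f, g * d * g⁻¹ ∈ Subgroup.normalizer (Hc : Set (GL (Fin 2) (ZMod ℓ))) := by
  obtain rfl : Hc = cartan ε := SetLike.coe_injective (hHc.trans (coe_cartan_eq_Cns ε).symm)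
  have he_bounds : 0 < e ∧ e ≤ 6 := by rcases he with rfl | rfl | rfl | rfl | rfl <;> norm_num
  have hf_pos : 0 < f := hf ▸ Nat.gcd_pos_of_pos_right _ he_bounds.1
  have hf_le : f ≤ e := hf ▸ Nat.gcd_le_right _ he_bounds.1
  have hcard : Nat.card (ZMod ℓ)ˣ = ℓ - 1 := by rw [Nat.card_eq_fintype_card, ZMod.card_units]
  exact stmt_10_general hsq (exists_pow_ne_one_of_isCyclic (by omega) (by omega))
end
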